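/- arXiv:2511.16637 — 4 statements merged into one kernel-verified Lean document; each statement's English description precedes it below -/
import Mathlib

section
/- Let x_1, …, x_n and y_1, …, y_n be bit sequences and let a_1, …, a_{n−1} and d_1, …, d_n be the bits defined by the lexicographic comparison circuit. Then d_n = 1 if and only if (x_1, …, x_n) ≤lex (y_1, …, y_n). -/
/-- The `a`-bits of the lexicographic comparison circuit (0-indexed):
`a_1 = [x_1 ≥ y_1]` and `a_{i+1} = a_i ∧ [x_{i+1} ≥ y_{i+1}]`, where for bits
`[x ≥ y]` is the Boolean `¬y ∨ x`. -/
def lexA (x y : ℕ → Bool) : ℕ → Bool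
  | 0 => !(y 0) || x 0
  | i + 1 => lexA x y i && (!(y (i + 1)) || x (i + 1))

/-- The `d`-bits of the lexicographic comparison circuit (0-indexed):
`d_1 = [y_1 ≥ x_1]` and `d_{i+1} = d_i ∧ (¬a_i ∨ [y_{i+1} ≥ x_{i+1}])`. -/
def lexD (x y : ℕ → Bool) : ℕ → Bool
  | 0 => !(x 0) || y 0
  | i + 1 => lexD x y i && (!(lexA x y i) || (!(x (i + 1)) || y (i + 1)))

/-- Lexicographic order on bit sequences of length `n` (0-indexed): either the
sequences are equal, or at the smallest index where they differ the first
sequence has `0` and the second has `1`. -/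
def lexLe (n : ℕ) (x y : ℕ → Bool) : Prop :=
  (∀ i < n, x i = y i) ∨
  ∃ i < n, (∀ j < i, x j = y j) ∧ x i = false ∧ y i = true

/-! The `a`-bits say that `x` dominates `y` bitwise on a prefix, so `d_n` is the conjunction over
`k` of the implications "if `y_i ≤ x_i` for all `i < k`, then `x_k ≤ y_k`". At the first position
where `x` and `y` differ the premise holds, so the implication says that `x` is the smaller one
there; if it is, then the premise fails at every later position, and the later implications are
void. -/

section Lex

variable {ι : Type*} {α : ι → Type*} [LinearOrder ι] [∀ i, PartialOrder (α i)]

theorem toLex_le_toLex_iff_eq_or_exists (x y : ∀ i, α i) :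
    toLex x ≤ toLex y ↔ x = y ∨ ∃ i, (∀ j < i, x j = y j) ∧ x i < y i :=
  le_iff_eq_or_lt

theorem toLex_le_toLex_iff_forall_imp_le [WellFoundedLT ι] (x y : ∀ i, α i) :
    toLex x ≤ toLex y ↔ ∀ k, (∀ i < k, y i ≤ x i) → x k ≤ y k := by
  rw [toLex_le_toLex_iff_eq_or_exists]
  constructor
  · rintro (rfl | ⟨i, h_before, h_lt⟩) k h_dom
    · exact le_rfl
    · rcases lt_trichotomy k i with hki | rfl | hik
      · exact (h_before k hki).le
      · exact h_lt.le
      · exact absurd (h_dom i hik) h_lt.not_ge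
  · intro h
    refine or_iff_not_imp_left.mpr fun h_ne ↦ ?_
    obtain ⟨i, hi, h_min⟩ :=
      wellFounded_lt.has_min {i | x i ≠ y i} (Function.ne_iff.mp h_ne)
    have h_before : ∀ j < i, x j = y j := fun j hj ↦ by_contra fun hj_ne ↦ h_min j hj_ne hj
    have h_le : x i ≤ y i := h i fun j hj ↦ (h_before j hj).ge
    exact ⟨i, h_before, h_le.lt_of_ne hi⟩

end Lex

theorem forall_fin_lt_iff {n : ℕ} (k : Fin n) (p : ℕ → Prop) :
    (∀ i < k, p i) ↔ ∀ i < (k : ℕ), p i :=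
  ⟨fun h i hi ↦ h ⟨i, hi.trans k.isLt⟩ hi, fun h i hi ↦ h i hi⟩

theorem lexLe_iff_toLex_le_toLex (n : ℕ) (x y : ℕ → Bool) :
    lexLe n x y ↔ toLex (fun i : Fin n ↦ x i) ≤ toLex (fun i : Fin n ↦ y i) := by
  simp only [lexLe, toLex_le_toLex_iff_eq_or_exists, funext_iff, Bool.lt_iff,
    forall_fin_lt_iff _ fun j ↦ x j = y j, Fin.forall_iff, Fin.exists_iff, exists_prop]

theorem lexLe_iff_forall_imp_le (n : ℕ) (x y : ℕ → Bool) :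
    lexLe n x y ↔ ∀ k < n, (∀ i < k, y i ≤ x i) → x k ≤ y k := by
  simp only [lexLe_iff_toLex_le_toLex, toLex_le_toLex_iff_forall_imp_le,
    forall_fin_lt_iff _ fun i ↦ y i ≤ x i, Fin.forall_iff]

theorem not_or_eq_true_iff_le (a b : Bool) : (!a || b) = true ↔ a ≤ b := by
  revert a b; decide

theorem lexA_eq_true_iff (x y : ℕ → Bool) (m : ℕ) :
    lexA x y m = true ↔ ∀ i < m + 1, y i ≤ x i := by
  induction m with
  | zero => rw [lexA, not_or_eq_true_iff_le]; simp
  | succ m ih =>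
    rw [lexA, Bool.and_eq_true, ih, not_or_eq_true_iff_le, Nat.forall_lt_succ_right (n := m + 1)]

theorem lexD_eq_true_iff (x y : ℕ → Bool) (m : ℕ) :
    lexD x y m = true ↔ ∀ k < m + 1, (∀ i < k, y i ≤ x i) → x k ≤ y k := by
  induction m with
  | zero => rw [lexD, not_or_eq_true_iff_le]; simp
  | succ m ih =>
    have h_gate : (!lexA x y m || (!x (m + 1) || y (m + 1))) = true ↔
        ((∀ i < m + 1, y i ≤ x i) → x (m + 1) ≤ y (m + 1)) := by
      rw [not_or_eq_true_iff_le, Bool.le_iff_imp, lexA_eq_true_iff, not_or_eq_true_iff_le]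
    rw [lexD, Bool.and_eq_true, ih, h_gate, Nat.forall_lt_succ_right (n := m + 1)]

/-- The output bit `d_n` of the lexicographic comparison
circuit is `1` iff `(x_1, …, x_n) ≤lex (y_1, …, y_n)`. -/
theorem circuit_computes_lex (n : ℕ) (hn : 1 ≤ n) (x y : ℕ → Bool) :
    lexD x y (n - 1) = true ↔ lexLe n x y := by
  rw [lexD_eq_true_iff, Nat.sub_add_cancel hn, lexLe_iff_forall_imp_le]
end

section
/- Let x_1, …, x_n, y_1, …, y_n, a_1, …, a_{n−1}, d_1, …, d_n be bits. Then the following pseudo-Boolean inequalities all hold — ā_1 + x_1 + ȳ_1 ≥ 1; 2a_1 + x̄_1 + y_1 ≥ 2; for 1 ≤ i ≤ n−2: 3ā_{i+1} + 2a_i + x_{i+1} + ȳ_{i+1} ≥ 3 and 2a_{i+1} + 2ā_i + x̄_{i+1} + y_{i+1} ≥ 2; d̄_1 + y_1 + x̄_1 ≥ 1; 2d_1 + ȳ_1 + x_1 ≥ 2; for 1 ≤ i ≤ n−1: 4d̄_{i+1} + 3d_i + ā_i + y_{i+1} + x̄_{i+1} ≥ 4 and 4d_{i+1} + 3d̄_i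 + a_i + ȳ_{i+1} + x_{i+1} ≥ 3 (where z̄ denotes 1 − z) — if and only if the bits a_i and d_i are exactly those produced by the lexicographic comparison circuit on inputs x_1, …, x_n and y_1, …, y_n. -/
/-!
Every pair of inequalities has the form `c * (1 - p) + s ≥ k`, `c' * p + s' ≥ k'` with `c ≥ k` and
`c' ≥ k'`, where `s'` is `s` with all literals negated and `k + k'` is the total weight of `s` plus
one. Hence `s' ≥ k'` is the negation of `s ≥ k`, and the pair says exactly that `p` is the truth
value of `s ≥ k`. The weights in `s` make this threshold condition the gate that computes `p`, so
the inequalities amount to the recurrences of the circuit, which determine its bits.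
-/

theorem reified_inequalities_iff {c c' k k' s s' : ℕ} (hc : k ≤ c) (hc' : k' ≤ c')
    (hs : s + s' + 1 = k + k') (p : Bool) :
    (c * (!p).toNat + s ≥ k ∧ c' * p.toNat + s' ≥ k') ↔ p = decide (k ≤ s) := by
  cases p
  · have compl : k' ≤ s' ↔ s < k := by omega
    simp [compl, le_add_right hc]
  · simp [le_add_right hc']

theorem decide_succ_le_mul_toNat_add {c s : ℕ} (hs : s ≤ c) (q : Bool) :
    decide (c + 1 ≤ c * q.toNat + s) = (q && decide (1 ≤ s)) := by
  cases q
  · simpa using hs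
  · simp

theorem decide_one_le_toNat_add (p : Bool) (s : ℕ) :
    decide (1 ≤ p.toNat + s) = (p || decide (1 ≤ s)) := by
  cases p <;> simp

section Gates

variable (p q r u v : Bool)

theorem decide_one_le_toNat_add_toNat_not :
    decide (1 ≤ u.toNat + (!v).toNat) = (!v || u) := by
  decide +revert

theorem ge_gate_iff :
    ((!p).toNat + u.toNat + (!v).toNat ≥ 1 ∧ 2 * p.toNat + (!u).toNat + v.toNat ≥ 2) ↔
      p = (!v || u) := by
  have compl : u.toNat + (!v).toNat + ((!u).toNat + v.toNat) + 1 = 1 + 2 := by decide +revert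
  rw [← decide_one_le_toNat_add_toNat_not]
  simpa only [one_mul, add_assoc] using reified_inequalities_iff le_rfl le_rfl compl p

theorem and_ge_gate_iff :
    (3 * (!p).toNat + 2 * q.toNat + u.toNat + (!v).toNat ≥ 3 ∧
      2 * p.toNat + 2 * (!q).toNat + (!u).toNat + v.toNat ≥ 2) ↔
      p = (q && (!v || u)) := by
  have compl : 2 * q.toNat + (u.toNat + (!v).toNat) +
      (2 * (!q).toNat + ((!u).toNat + v.toNat)) + 1 = 3 + 2 := by decide +revert
  have weight : u.toNat + (!v).toNat ≤ 2 := by decide +revert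
  rw [← decide_one_le_toNat_add_toNat_not, ← decide_succ_le_mul_toNat_add weight]
  simpa only [add_assoc] using reified_inequalities_iff le_rfl le_rfl compl p

theorem and_not_or_ge_gate_iff :
    (4 * (!p).toNat + 3 * q.toNat + (!r).toNat + u.toNat + (!v).toNat ≥ 4 ∧
      4 * p.toNat + 3 * (!q).toNat + r.toNat + (!u).toNat + v.toNat ≥ 3) ↔
      p = (q && (!r || (!v || u))) := by
  have compl : 3 * q.toNat + ((!r).toNat + (u.toNat + (!v).toNat)) +
      (3 * (!q).toNat + (r.toNat + ((!u).toNat + v.toNat))) + 1 = 4 + 3 := by decide +revert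
  have weight : (!r).toNat + (u.toNat + (!v).toNat) ≤ 3 := by decide +revert
  rw [← decide_one_le_toNat_add_toNat_not u v, ← decide_one_le_toNat_add,
    ← decide_succ_le_mul_toNat_add weight]
  simpa only [add_assoc] using reified_inequalities_iff le_rfl (by decide) compl p

end Gates

theorem recurrence_iff_forall_lt_eq {α : Type*} {f F : ℕ → α} {g : ℕ → α → α}
    (hF : ∀ i, F (i + 1) = g i (F i)) (m : ℕ) :
    (f 0 = F 0 ∧ ∀ i, i < m → f (i + 1) = g i (f i)) ↔ ∀ i, i < m + 1 → f i = F i := by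
  constructor
  · rintro ⟨zero, succ⟩ i hi
    induction i with
    | zero => exact zero
    | succ i ih => rw [succ i (by omega), ih (by omega), hF]
  · intro h
    exact ⟨h 0 (by omega), fun i hi => by rw [h (i + 1) (by omega), h i (by omega), hF]⟩

section Circuit

variable {x y a d : ℕ → Bool} {m : ℕ}

theorem lexA_inequalities_iff :
    (((!(a 0)).toNat + (x 0).toNat + (!(y 0)).toNat ≥ 1) ∧
     (2 * (a 0).toNat + (!(x 0)).toNat + (y 0).toNat ≥ 2) ∧
     (∀ i, i < m →
       3 * (!(a (i + 1))).toNat + 2 * (a i).toNat + (x (i + 1)).toNat +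
         (!(y (i + 1))).toNat ≥ 3) ∧
     (∀ i, i < m →
       2 * (a (i + 1)).toNat + 2 * (!(a i)).toNat + (!(x (i + 1))).toNat +
         (y (i + 1)).toNat ≥ 2)) ↔
    ∀ i, i < m + 1 → a i = lexA x y i :=
  calc
    _ ↔ a 0 = (!(y 0) || x 0) ∧
        ∀ i, i < m → a (i + 1) = (a i && (!(y (i + 1)) || x (i + 1))) := by
      simp only [← ge_gate_iff, ← and_ge_gate_iff, forall₂_and, and_assoc]
    _ ↔ _ := recurrence_iff_forall_lt_eq (F := lexA x y)
      (g := fun i z => z && (!(y (i + 1)) || x (i + 1))) (fun _ => rfl) m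

theorem lexD_inequalities_iff (hA : ∀ i, i < m → a i = lexA x y i) :
    (((!(d 0)).toNat + (y 0).toNat + (!(x 0)).toNat ≥ 1) ∧
     (2 * (d 0).toNat + (!(y 0)).toNat + (x 0).toNat ≥ 2) ∧
     (∀ i, i < m →
       4 * (!(d (i + 1))).toNat + 3 * (d i).toNat + (!(a i)).toNat +
         (y (i + 1)).toNat + (!(x (i + 1))).toNat ≥ 4) ∧
     (∀ i, i < m →
       4 * (d (i + 1)).toNat + 3 * (!(d i)).toNat + (a i).toNat +
         (!(y (i + 1))).toNat + (x (i + 1)).toNat ≥ 3)) ↔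
    ∀ i, i < m + 1 → d i = lexD x y i :=
  calc
    _ ↔ d 0 = (!(x 0) || y 0) ∧
        ∀ i, i < m → d (i + 1) = (d i && (!(a i) || (!(x (i + 1)) || y (i + 1)))) := by
      simp only [← ge_gate_iff, ← and_not_or_ge_gate_iff, forall₂_and, and_assoc]
    _ ↔ d 0 = (!(x 0) || y 0) ∧
        ∀ i, i < m → d (i + 1) = (d i && (!(lexA x y i) || (!(x (i + 1)) || y (i + 1)))) :=
      and_congr_right' (forall₂_congr fun i hi => by rw [hA i hi])
    _ ↔ _ := recurrence_iff_forall_lt_eq (F := lexD x y)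
      (g := fun i z => z && (!(lexA x y i) || (!(x (i + 1)) || y (i + 1)))) (fun _ => rfl) m

end Circuit

/-- The listed pseudo-Boolean inequalities all hold iff the
bits `a_i` and `d_i` are exactly those produced by the lexicographic comparison
circuit on inputs `x` and `y` (0-indexed: `a_i, d_i` of the statement are
`a (i-1), d (i-1)` here). -/
theorem pb_encoding_characterizes_circuit (n : ℕ) (hn : 2 ≤ n)
    (x y a d : ℕ → Bool) :
    (((!(a 0)).toNat + (x 0).toNat + (!(y 0)).toNat ≥ 1) ∧
     (2 * (a 0).toNat + (!(x 0)).toNat + (y 0).toNat ≥ 2) ∧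
     (∀ i, i < n - 2 →
       3 * (!(a (i + 1))).toNat + 2 * (a i).toNat + (x (i + 1)).toNat +
         (!(y (i + 1))).toNat ≥ 3) ∧
     (∀ i, i < n - 2 →
       2 * (a (i + 1)).toNat + 2 * (!(a i)).toNat + (!(x (i + 1))).toNat +
         (y (i + 1)).toNat ≥ 2) ∧
     ((!(d 0)).toNat + (y 0).toNat + (!(x 0)).toNat ≥ 1) ∧
     (2 * (d 0).toNat + (!(y 0)).toNat + (x 0).toNat ≥ 2) ∧
     (∀ i, i < n - 1 →
       4 * (!(d (i + 1))).toNat + 3 * (d i).toNat + (!(a i)).toNat +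
         (y (i + 1)).toNat + (!(x (i + 1))).toNat ≥ 4) ∧
     (∀ i, i < n - 1 →
       4 * (d (i + 1)).toNat + 3 * (!(d i)).toNat + (a i).toNat +
         (!(y (i + 1))).toNat + (x (i + 1)).toNat ≥ 3)) ↔
    ((∀ i, i < n - 1 → a i = lexA x y i) ∧ (∀ i, i < n → d i = lexD x y i)) := by
  obtain ⟨m, rfl⟩ := Nat.exists_eq_add_of_le' hn
  constructor
  · rintro ⟨a_zero_le, a_zero_ge, a_succ_le, a_succ_ge, d_ineqs⟩
    have hA := lexA_inequalities_iff.1 ⟨a_zero_le, a_zero_ge, a_succ_le, a_succ_ge⟩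
    exact ⟨hA, (lexD_inequalities_iff hA).1 d_ineqs⟩
  · rintro ⟨hA, hD⟩
    obtain ⟨a_zero_le, a_zero_ge, a_succ_le, a_succ_ge⟩ := lexA_inequalities_iff.2 hA
    exact ⟨a_zero_le, a_zero_ge, a_succ_le, a_succ_ge, (lexD_inequalities_iff hA).2 hD⟩
end

section
/- (Expanding a reification.) Let r be a bit, let ℓ_1, …, ℓ_m be bits, let a_1, …, a_m be nonnegative integers, and let A be an integer with 0 ≤ A ≤ ∑_i a_i + 1. Then the equivalence 'r = 1 if and only if ∑_i a_i ℓ_i ≥ A' holds if and only if both of the following pseudo-Boolean inequalities hold: A·(1−r) + ∑_i a_i ℓ_i ≥ A, and (∑_i a_i − A + 1)·r + ∑_i a_i (1−ℓ_i) ≥ ∑_i a_i − A + 1. -/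
/-!
The constraint `B (1 - p) + S ≥ B` with `S ≥ 0` is the implication `p → B ≤ S`. This reads the first
inequality as `r → ∑ aᵢ ℓᵢ ≥ A`. The second is the same constraint for `¬ r`, and since
`∑ aᵢ (1 - ℓᵢ) = ∑ aᵢ - ∑ aᵢ ℓᵢ`, integrality turns its consequent into the negation of
`∑ aᵢ ℓᵢ ≥ A`; it is therefore the contrapositive of the converse implication.
-/

theorem le_mul_ite_add_iff {R : Type*} [NonAssocSemiring R] [Preorder R] [AddLeftMono R]
    (p : Prop) [Decidable p] (B : R) {S : R} (hS : 0 ≤ S) :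
    B ≤ B * (if p then 0 else 1) + S ↔ (p → B ≤ S) := by
  by_cases hp : p
  · simp only [hp, if_true, mul_zero, zero_add, true_imp_iff]
  · simp only [hp, if_false, mul_one, false_imp_iff, iff_true]
    exact le_add_of_nonneg_right hS

section LinearForm

variable {ι : Type*} (s : Finset ι) (ℓ : ι → Prop) [DecidablePred ℓ]

theorem sum_mul_ite_add_sum_mul_ite_not {R : Type*} [NonAssocSemiring R] (a : ι → R) :
    ∑ i ∈ s, a i * (if ℓ i then 1 else 0) + ∑ i ∈ s, a i * (if ℓ i then 0 else 1) =
      ∑ i ∈ s, a i := by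
  rw [← Finset.sum_add_distrib]
  refine Finset.sum_congr rfl fun i _ => ?_
  split_ifs <;> simp

theorem sum_sub_add_one_le_sum_mul_ite_not_iff (a : ι → ℤ) (A : ℤ) :
    (∑ i ∈ s, a i) - A + 1 ≤ ∑ i ∈ s, a i * (if ℓ i then 0 else 1) ↔
      ¬ A ≤ ∑ i ∈ s, a i * (if ℓ i then 1 else 0) := by
  rw [← sum_mul_ite_add_sum_mul_ite_not s ℓ a]
  lia

theorem reification_expansion_general (r : Prop) [Decidable r] {a : ι → ℤ}
    (ha : ∀ i ∈ s, 0 ≤ a i) (A : ℤ) :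
    (r ↔ A ≤ ∑ i ∈ s, a i * (if ℓ i then 1 else 0)) ↔
      (A ≤ A * (if r then 0 else 1) + ∑ i ∈ s, a i * (if ℓ i then 1 else 0)) ∧
      ((∑ i ∈ s, a i) - A + 1 ≤
        ((∑ i ∈ s, a i) - A + 1) * (if r then 1 else 0) +
          ∑ i ∈ s, a i * (if ℓ i then 0 else 1)) := by
  have sum_nonneg : 0 ≤ ∑ i ∈ s, a i * (if ℓ i then 1 else 0) :=
    Finset.sum_nonneg fun i hi => mul_nonneg (ha i hi) (by positivity)
  have sum_not_nonneg : 0 ≤ ∑ i ∈ s, a i * (if ℓ i then 0 else 1) :=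
    Finset.sum_nonneg fun i hi => mul_nonneg (ha i hi) (by positivity)
  rw [le_mul_ite_add_iff r A sum_nonneg, ← ite_not (p := r),
    le_mul_ite_add_iff (¬ r) _ sum_not_nonneg, sum_sub_add_one_le_sum_mul_ite_not_iff,
    not_imp_not]
  exact iff_def

end LinearForm

/-- **expanding a reification.** For a bit `r`, bits `ℓ_i`,
nonnegative integer coefficients `a_i` and an integer `A` with
`0 ≤ A ≤ ∑ a_i + 1`, the equivalence `r = 1 ↔ ∑ a_i ℓ_i ≥ A` holds iff both
pseudo-Boolean inequalities `A(1−r) + ∑ a_i ℓ_i ≥ A` and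
`(∑ a_i − A + 1) r + ∑ a_i (1−ℓ_i) ≥ ∑ a_i − A + 1` hold. -/
theorem reification_expansion (m : ℕ) (r : Bool) (ℓ : Fin m → Bool)
    (a : Fin m → ℕ) (A : ℤ) (hA0 : 0 ≤ A)
    (hA1 : A ≤ (∑ i, (a i : ℤ)) + 1) :
    ((r = true) ↔ A ≤ ∑ i, (a i : ℤ) * (if ℓ i then 1 else 0)) ↔
    ((A ≤ A * (if r then 0 else 1) +
        ∑ i, (a i : ℤ) * (if ℓ i then 1 else 0)) ∧
     ((∑ i, (a i : ℤ)) - A + 1 ≤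
        ((∑ i, (a i : ℤ)) - A + 1) * (if r then 1 else 0) +
          ∑ i, (a i : ℤ) * (if ℓ i then 0 else 1))) :=
  reification_expansion_general Finset.univ (fun i => ℓ i = true) (r = true)
    (fun i _ => Int.natCast_nonneg (a i)) A
end

section
/- (Correctness of the clausal lex-leader encoding.) Let x_1, …, x_n, y_1, …, y_n, s_1, …, s_{n−1} be bits, and consider the clauses: s_1 ∨ ¬x_1; s_1 ∨ y_1; y_1 ∨ ¬x_1; for 1 ≤ i ≤ n−2: s_{i+1} ∨ ¬s_i ∨ ¬x_{i+1} and s_{i+1} ∨ ¬s_i ∨ y_{i+1}; and for 1 ≤ i ≤ n−1: ¬s_i ∨ y_{i+1} ∨ ¬x_{i+1}. Then: (i) if all of these clauses hold, then (x_1, …, x_n) ≤lex (y_1, …, y_n); and (ii) conversely, if (x_1, …, x_n) ≤lex (y_1, …, y_n), then setting s_i = 1 if and only if (x_1, …, x_i) = (y_1, …, y_i), for each 1 ≤ i ≤ n−1, makes all of these clauses hold. -/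
/-- The clauses of the clausal lex-leader encoding with auxiliary bits `s`
(0-indexed: `s i`, `x i`, `y i` here are `s_{i+1}`, `x_{i+1}`, `y_{i+1}` of the
statement). -/
def lexClauses (n : ℕ) (x y s : ℕ → Bool) : Prop :=
  (s 0 = true ∨ x 0 = false) ∧
  (s 0 = true ∨ y 0 = true) ∧
  (y 0 = true ∨ x 0 = false) ∧
  (∀ i, i < n - 2 → (s (i + 1) = true ∨ s i = false ∨ x (i + 1) = false)) ∧
  (∀ i, i < n - 2 → (s (i + 1) = true ∨ s i = false ∨ y (i + 1) = true)) ∧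
  (∀ i, i < n - 1 → (s i = false ∨ y (i + 1) = true ∨ x (i + 1) = false))

theorem forall_lt_succ_eq_or_lt {α : Type*} [PartialOrder α] {x y : ℕ → α} {i : ℕ}
    (hprefix : ∀ j < i, x j = y j) (hle : x i ≤ y i) :
    (∀ j < i + 1, x j = y j) ∨ x i < y i :=
  hle.eq_or_lt.imp_left fun heq => Nat.forall_lt_succ_right.mpr ⟨hprefix, heq⟩

theorem forall_lt_eq_or_exists_lt_iff {α : Type*} [PartialOrder α] {x y : ℕ → α} {n : ℕ} :
    ((∀ i < n, x i = y i) ∨ ∃ i < n, (∀ j < i, x j = y j) ∧ x i < y i) ↔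
      ∀ i < n, (∀ j < i, x j = y j) → x i ≤ y i := by
  constructor
  · rintro (heq | ⟨k, -, hprefix, hlt⟩) i hi hi_prefix
    · exact (heq i hi).le
    · rcases lt_trichotomy i k with hik | rfl | hki
      · exact (hprefix i hik).le
      · exact hlt.le
      · exact absurd (hi_prefix k hki) hlt.ne
  · intro hle
    induction n with
    | zero => exact Or.inl fun _ hi => absurd hi (Nat.not_lt_zero _)
    | succ n ih =>
      rcases ih fun i hi => hle i (Nat.lt_succ_of_lt hi) with hprefix | ⟨k, hk, hfirst⟩
      · exact (forall_lt_succ_eq_or_lt hprefix (hle n n.lt_succ_self hprefix)).imp_right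
          fun hlt => ⟨n, n.lt_succ_self, hprefix, hlt⟩
      · exact Or.inr ⟨k, Nat.lt_succ_of_lt hk, hfirst⟩

theorem flag_of_forall_lt_succ_eq {α : Type*} [Preorder α] {x y : ℕ → α} {flag : ℕ → Prop}
    {m : ℕ} (hzero : flag 0 ∨ x 0 < y 0)
    (hsucc : ∀ i < m, flag i → flag (i + 1) ∨ x (i + 1) < y (i + 1))
    {i : ℕ} (hi : i ≤ m) (heq : ∀ j < i + 1, x j = y j) : flag i := by
  induction i with
  | zero => exact hzero.resolve_right (heq 0 Nat.zero_lt_one).not_lt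
  | succ i ih =>
    obtain ⟨hprefix, hlast⟩ := Nat.forall_lt_succ_right.mp heq
    exact (hsucc i hi (ih (Nat.le_of_succ_le hi) hprefix)).resolve_right hlast.not_lt

theorem lexLe_iff_forall_le {n : ℕ} {x y : ℕ → Bool} :
    lexLe n x y ↔ ∀ i < n, (∀ j < i, x j = y j) → x i ≤ y i := by
  simp only [lexLe, ← Bool.lt_iff, forall_lt_eq_or_exists_lt_iff]

theorem lexClauses_iff {n : ℕ} {x y s : ℕ → Bool} :
    lexClauses n x y s ↔
      (s 0 = true ∨ x 0 < y 0) ∧ x 0 ≤ y 0 ∧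
      (∀ i < n - 2, s i = true → s (i + 1) = true ∨ x (i + 1) < y (i + 1)) ∧
      ∀ i < n - 1, s i = true → x (i + 1) ≤ y (i + 1) := by
  simp only [lexClauses, Bool.lt_iff, Bool.le_iff_imp]
  grind

theorem lexLe_of_lexClauses {n : ℕ} {x y s : ℕ → Bool} (h : lexClauses n x y s) :
    lexLe n x y := by
  obtain ⟨hflag_zero, hle_zero, hflag_succ, hle_succ⟩ := lexClauses_iff.mp h
  rw [lexLe_iff_forall_le]
  rintro (_ | i) hi hprefix
  · exact hle_zero
  · have hflag : s i = true :=
      flag_of_forall_lt_succ_eq (flag := (s · = true)) hflag_zero hflag_succ (by omega) hprefix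
    exact hle_succ i (by omega) hflag

theorem lexClauses_of_lexLe {n : ℕ} (hn : 1 ≤ n) {x y : ℕ → Bool} (h : lexLe n x y) :
    lexClauses n x y (fun i => decide (∀ j < i + 1, x j = y j)) := by
  have hle : ∀ i < n, (∀ j < i, x j = y j) → x i ≤ y i := lexLe_iff_forall_le.mp h
  have hnil : ∀ j < 0, x j = y j := fun _ hj => absurd hj (Nat.not_lt_zero _)
  simp only [lexClauses_iff, decide_eq_true_eq]
  refine ⟨forall_lt_succ_eq_or_lt hnil (hle 0 hn hnil), hle 0 hn hnil, ?_, ?_⟩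
  · exact fun i hi hprefix => forall_lt_succ_eq_or_lt hprefix (hle (i + 1) (by omega) hprefix)
  · exact fun i hi hprefix => hle (i + 1) (by omega) hprefix

/-- **correctness of the clausal lex-leader encoding.**
(i) If all clauses hold then `x ≤lex y`; (ii) conversely, if `x ≤lex y`, then
setting `s_i = 1` iff the length-`i` prefixes of `x` and `y` are equal makes
all clauses hold. -/
theorem lex_clauses_correct (n : ℕ) (hn : 1 ≤ n) (x y : ℕ → Bool) :
    (∀ s : ℕ → Bool, lexClauses n x y s → lexLe n x y) ∧
    (lexLe n x y →
      lexClauses n x y (fun i => decide (∀ j < i + 1, x j = y j))) :=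
  ⟨fun _ => lexLe_of_lexClauses, lexClauses_of_lexLe hn⟩
end
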